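/- Let n ≥ 2 and b ∈ ℝ, and let L ⊆ ℝⁿ be the hyperplane parameterized by f(x₁,…,x_{n−1}) = (x₁,…,x_{n−1}, b). Then ω×(L) = max{n, n·σ(b)}. -/

import Mathlib

open Filter MeasureTheory Metric Set BigOperators

/-- Π×(q) = ∏_{i : qᵢ ≠ 0} |qᵢ| (empty product = 1). -/
noncomputable def prodTimes {n : ℕ} (q : Fin n → ℤ) : ℝ :=
  ∏ i, if q i = 0 then 1 else |(q i : ℝ)|

/-- Multiplicative Diophantine exponent ω×(y): the sup (in the extended reals) of all
v ∈ ℝ such that there are infinitely many q ∈ ℤⁿ with |q·y + p| < Π×(q)^{-v/n}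
for some p ∈ ℤ. -/
noncomputable def omegaT {n : ℕ} (y : Fin n → ℝ) : EReal :=
  sSup {w : EReal | ∃ v : ℝ, w = (v : EReal) ∧
    {q : Fin n → ℤ | ∃ p : ℤ, |(∑ i, (q i : ℝ) * y i) + (p : ℝ)| <
      (prodTimes q) ^ (-(v / (n : ℝ)))}.Infinite}

/-- ω×(μ) for a measure: sup{v : μ{y : ω×(y) > v} > 0}. -/
noncomputable def omegaTMeas {n : ℕ} (μ : Measure (Fin n → ℝ)) : EReal :=
  sSup {w : EReal | ∃ v : ℝ, w = (v : EReal) ∧ 0 < μ {y | (v : EReal) < omegaT y}}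

/-- σ(b) for a scalar b. -/
noncomputable def sigma1 (b : ℝ) : EReal :=
  sSup {w : EReal | ∃ v : ℝ, w = (v : EReal) ∧
    {q : ℤ | ∃ p : ℤ, |(q : ℝ) * b + (p : ℝ)| < |(q : ℝ)| ^ (-v)}.Infinite}

/-!
The distance to the nearest integer is the norm on `ℝ ⧸ ℤ`, so `ω×` lives on the torus. Write an
integer vector as `q = (k, l)`, with `l` its last entry. If `k ≠ 0`, then `ξ ↦ k · ξ` carries the
Haar measure of the torus to that of the circle, so `‖k · ξ + l b‖ < Π×(q) ^ (-s)` holds on a set of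
measure at most `2 Π×(q) ^ (-s)`. These bounds are summable for `s > 1`, and by Borel–Cantelli the
`q` with `k ≠ 0` contribute an exponent at most `1` for almost every `ξ`. The `q` with `k = 0`
contribute exactly `σ(b)`, which is at least `1` by Dirichlet's theorem. Hence `ω×(x, b) = n σ(b)`
for almost every `x`.
-/

open Function (Injective)

section ApproxExponent

variable {ι κ : Type*} {d h : ι → ℝ}

/-- The exponent of approximation of a family of quantities `d q` of size `h q`: the supremum in
the extended reals of the `v` such that `d q < h q ^ (-v)` for infinitely many `q`. It is the common
shape of `sigma1` and `omegaT`. -/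
noncomputable def approxExponent (d h : ι → ℝ) : EReal :=
  sSup {w : EReal | ∃ v : ℝ, w = v ∧ {q | d q < h q ^ (-v)}.Infinite}

theorem le_approxExponent {v : ℝ} (hv : {q | d q < h q ^ (-v)}.Infinite) :
    v ≤ approxExponent d h :=
  le_sSup ⟨v, rfl, hv⟩

theorem approxExponent_le_iff {c : EReal} :
    approxExponent d h ≤ c ↔ ∀ v : ℝ, {q | d q < h q ^ (-v)}.Infinite → v ≤ c := by
  simp only [approxExponent, sSup_le_iff, mem_ofPred_eq, forall_exists_index, and_imp]
  exact ⟨fun H v hv ↦ H v v rfl hv, fun H w v hw hv ↦ hw ▸ H v hv⟩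

theorem approxExponent_le_of_finite (hh : ∀ q, 1 ≤ h q) {v : ℝ}
    (hv : {q | d q < h q ^ (-v)}.Finite) : approxExponent d h ≤ v := by
  refine approxExponent_le_iff.2 fun w hw ↦ EReal.coe_le_coe_iff.2 ?_
  by_contra! hlt
  exact hw <| hv.subset fun q hq ↦
    hq.trans_le (Real.rpow_le_rpow_of_exponent_le (hh q) (neg_le_neg hlt.le))

theorem approxExponent_le_of_injective {d' h' : κ → ℝ} {f : κ → ι} (hf : Injective f)
    (hd : ∀ k, d (f k) = d' k) (hh : ∀ᶠ k in cofinite, h (f k) = h' k) :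
    approxExponent d' h' ≤ approxExponent d h := by
  refine approxExponent_le_iff.2 fun v hv ↦ le_approxExponent ?_
  refine ((hv.sdiff hh).image hf.injOn).mono ?_
  rintro _ ⟨k, ⟨hk, hhk⟩, rfl⟩
  have hhk : h (f k) = h' k := not_not.1 hhk
  rwa [mem_ofPred_eq, hd, hhk]

theorem approxExponent_le_max_subtype (p : ι → Prop) :
    approxExponent d h ≤ max (approxExponent (fun q : {q // p q} ↦ d q) (fun q ↦ h q))
      (approxExponent (fun q : {q // ¬p q} ↦ d q) (fun q ↦ h q)) := by
  refine approxExponent_le_iff.2 fun v hv ↦ le_max_iff.2 ?_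
  rw [← inter_union_compl {q | d q < h q ^ (-v)} {q | p q}, infinite_union] at hv
  refine hv.imp (fun H ↦ le_approxExponent ?_) (fun H ↦ le_approxExponent ?_)
  all_goals
    refine Infinite.of_image Subtype.val (H.mono ?_)
    rintro q ⟨hq, hp⟩
    exact ⟨⟨q, hp⟩, hq, rfl⟩

end ApproxExponent

section Circle

theorem exists_int_abs_add_lt_iff {t δ : ℝ} :
    (∃ p : ℤ, |t + p| < δ) ↔ ‖(t : UnitAddCircle)‖ < δ := by
  rw [UnitAddCircle.norm_eq]
  refine ⟨fun ⟨p, hp⟩ ↦ ?_, fun h ↦ ⟨-round t, by simpa [sub_eq_add_neg] using h⟩⟩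
  have hround := round_le t (-p)
  simp only [Int.cast_neg, sub_neg_eq_add] at hround
  exact hround.trans_lt hp

/-- The exponent `σ` as a function on the circle `ℝ ⧸ ℤ`. -/
noncomputable def circleExponent (β : UnitAddCircle) : EReal :=
  approxExponent (fun q : ℤ ↦ ‖q • β‖) (fun q ↦ |(q : ℝ)|)

theorem sigma1_eq_circleExponent (b : ℝ) : sigma1 b = circleExponent b := by
  simp only [sigma1, circleExponent, approxExponent, exists_int_abs_add_lt_iff, ← zsmul_eq_mul,
    AddCircle.coe_zsmul]

theorem infinite_norm_zsmul_lt (β : UnitAddCircle) :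
    {q : ℤ | ‖q • β‖ < |(q : ℝ)|⁻¹}.Infinite := by
  by_cases hβ : IsOfFinAddOrder β
  · have hpos : (0 : ℤ) < addOrderOf β := by exact_mod_cast hβ.addOrderOf_pos
    refine (infinite_range_of_injective (f := fun k : ℕ ↦ ((k : ℤ) + 1) * addOrderOf β) ?_).mono ?_
    · intro k l hkl
      exact_mod_cast add_right_cancel (mul_right_cancel₀ hpos.ne' hkl)
    · rintro _ ⟨k, rfl⟩
      have hq : ((k : ℤ) + 1) * addOrderOf β ≠ 0 := by positivity
      rw [mem_ofPred_eq, mul_zsmul, natCast_zsmul, addOrderOf_nsmul_eq_zero, smul_zero, norm_zero]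
      exact inv_pos.2 (abs_pos.2 (Int.cast_ne_zero.2 hq))
  · intro hfin
    have hne : ∀ q ∈ {q : ℤ | ‖q • β‖ < |(q : ℝ)|⁻¹}, 0 < ‖q • β‖ := by
      intro q hq
      refine norm_pos_iff.2 fun h0 ↦ hβ (isOfFinAddOrder_iff_zsmul_eq_zero.2 ⟨q, ?_, h0⟩)
      rintro rfl
      simp at hq
    obtain ⟨n, hn⟩ : ∃ n : ℕ, ∀ q ∈ {q : ℤ | ‖q • β‖ < |(q : ℝ)|⁻¹}, 1 / ((n : ℝ) + 1) < ‖q • β‖ :=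
      ((eventually_all_finite hfin).2 fun q hq ↦
        tendsto_one_div_add_atTop_nhds_zero_nat.eventually_lt_const (hne q hq)).exists
    obtain ⟨j, ⟨hj, hjn⟩, hle⟩ := AddCircle.exists_norm_nsmul_le β n.succ_pos
    have hj0 : (0 : ℝ) < j := by exact_mod_cast hj
    have hjn' : (j : ℝ) ≤ n + 1 := by exact_mod_cast hjn
    have hle' : ‖(j : ℤ) • β‖ ≤ 1 / ((n : ℝ) + 1 + 1) := by simpa using hle
    have hlt : 1 / ((n : ℝ) + 1 + 1) < |((j : ℤ) : ℝ)|⁻¹ := by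
      rw [Int.cast_natCast, Nat.abs_cast, ← one_div]
      exact one_div_lt_one_div_of_lt hj0 (by linarith)
    have hmono : 1 / ((n : ℝ) + 1 + 1) ≤ 1 / ((n : ℝ) + 1) :=
      one_div_le_one_div_of_le (by positivity) (by linarith)
    exact ((hn j (hle'.trans_lt hlt)).trans_le (hle'.trans hmono)).false

theorem one_le_circleExponent (β : UnitAddCircle) : 1 ≤ circleExponent β := by
  refine le_approxExponent (v := 1) ?_
  simpa only [Real.rpow_neg_one] using infinite_norm_zsmul_lt β

end Circle

section Torus

variable {ι κ : Type*} [Fintype ι]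

-- A nonzero integral linear form is a continuous epimorphism of compact groups, so it carries Haar
-- measure to Haar measure.
theorem measurePreserving_sum_zsmul {k : ι → ℤ} (hk : k ≠ 0) :
    MeasurePreserving (fun ξ : UnitAddTorus ι ↦ ∑ i, k i • ξ i) := by
  classical
  obtain ⟨i, hi⟩ := Function.ne_iff.1 hk
  let φ : UnitAddTorus ι →+ UnitAddCircle :=
    ∑ i, (zsmulAddGroupHom (k i)).comp (Pi.evalAddMonoidHom (fun _ ↦ UnitAddCircle) i)
  have hφ : ⇑φ = fun ξ ↦ ∑ i, k i • ξ i := by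
    ext ξ
    simp [φ]
  rw [← hφ]
  refine φ.measurePreserving (by rw [hφ]; fun_prop) (fun η ↦ ?_)
    (by simp [volume_pi, Measure.pi_univ])
  refine ⟨Pi.single i (DivisibleBy.div η (k i)), ?_⟩
  calc φ (Pi.single i (DivisibleBy.div η (k i)))
      = k i • DivisibleBy.div η (k i) := by
        simp only [hφ]
        rw [Fintype.sum_eq_single i fun j hj ↦ by simp [hj], Pi.single_eq_same]
    _ = η := DivisibleBy.div_cancel η hi

theorem volume_norm_sum_zsmul_add_lt_le {k : ι → ℤ} (hk : k ≠ 0) (c : UnitAddCircle) (δ : ℝ) :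
    volume {ξ : UnitAddTorus ι | ‖∑ i, k i • ξ i + c‖ < δ} ≤ ENNReal.ofReal (2 * δ) := by
  have hpre : {ξ : UnitAddTorus ι | ‖∑ i, k i • ξ i + c‖ < δ}
      = (fun ξ ↦ ∑ i, k i • ξ i) ⁻¹' ball (-c) δ := by
    ext ξ
    simp [dist_eq_norm]
  calc volume {ξ : UnitAddTorus ι | ‖∑ i, k i • ξ i + c‖ < δ}
      = volume (ball (-c) δ) := by
        rw [hpre, (measurePreserving_sum_zsmul hk).measure_preimage
          measurableSet_ball.nullMeasurableSet]
    _ ≤ volume (closedBall (-c) δ) := measure_mono ball_subset_closedBall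
    _ ≤ ENNReal.ofReal (2 * δ) := by
        rw [AddCircle.volume_closedBall]
        exact ENNReal.ofReal_le_ofReal (min_le_right _ _)

theorem ae_approxExponent_norm_sum_zsmul_add_le [Countable κ] {k : κ → ι → ℤ} (hk : ∀ q, k q ≠ 0)
    (c : κ → UnitAddCircle) {h : κ → ℝ} (hh : ∀ q, 1 ≤ h q) {τ : ℝ}
    (hsum : ∀ s, τ < s → Summable fun q ↦ h q ^ (-s)) :
    ∀ᵐ ξ : UnitAddTorus ι, approxExponent (fun q ↦ ‖∑ i, k q i • ξ i + c q‖) h ≤ τ := by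
  rw [eventually_le_const_iff_forall_gt_eventually_lt_const]
  intro u hu
  obtain ⟨s, hτs, hsu⟩ := EReal.lt_iff_exists_real_btwn.1 hu
  have hfin : ∀ᵐ ξ : UnitAddTorus ι, {q | ‖∑ i, k q i • ξ i + c q‖ < h q ^ (-s)}.Finite := by
    refine ae_finite_setOfPred_mem
      (s := fun q ↦ {ξ : UnitAddTorus ι | ‖∑ i, k q i • ξ i + c q‖ < h q ^ (-s)}) ?_
    refine ne_top_of_le_ne_top ?_
      (ENNReal.tsum_le_tsum fun q ↦ volume_norm_sum_zsmul_add_lt_le (hk q) (c q) _)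
    exact ((hsum s (EReal.coe_lt_coe_iff.1 hτs)).mul_left 2).tsum_ofReal_ne_top
  filter_upwards [hfin] with ξ hξ
  exact (approxExponent_le_of_finite hh hξ).trans_lt hsu

theorem quasiMeasurePreserving_coe_unitAddTorus :
    Measure.QuasiMeasurePreserving (fun (x : ι → ℝ) i ↦ (x i : UnitAddCircle)) := by
  have hbox (a : ι → ℤ) : MeasurePreserving (fun (x : ι → ℝ) i ↦ (x i : UnitAddCircle))
      (volume.restrict (univ.pi fun i ↦ Ioc (a i : ℝ) (a i + 1))) := by
    rw [volume_pi, Measure.restrict_pi_pi]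
    exact measurePreserving_pi _ _ fun i ↦ UnitAddCircle.measurePreserving_mk (a i)
  have hcover : (⋃ a : ι → ℤ, univ.pi fun i ↦ Ioc (a i : ℝ) (a i + 1)) = univ := by
    rw [iUnion_univ_pi fun (_ : ι) (n : ℤ) ↦ Ioc (n : ℝ) (n + 1), iUnion_Ioc_intCast, pi_univ]
  refine ⟨(hbox 0).measurable, Measure.AbsolutelyContinuous.mk fun s hs hs0 ↦ ?_⟩
  rw [Measure.map_apply (hbox 0).measurable hs, ← inter_univ (_ ⁻¹' s), ← hcover, inter_iUnion,
    measure_iUnion_null_iff]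
  intro a
  rw [← Measure.restrict_apply ((hbox a).measurable hs), (hbox a).measure_preimage
    hs.nullMeasurableSet, hs0]

end Torus

section ProdTimes

variable {n : ℕ}

theorem one_le_prodTimes (q : Fin n → ℤ) : 1 ≤ prodTimes q := by
  refine Finset.one_le_prod fun i _ ↦ ?_
  split_ifs with hi
  · exact le_rfl
  · exact_mod_cast Int.one_le_abs hi

theorem prodTimes_of_init_eq_zero {q : Fin (n + 1) → ℤ} (hq : Fin.init q = 0)
    (hlast : q (Fin.last n) ≠ 0) : prodTimes q = |(q (Fin.last n) : ℝ)| := by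
  have hcast (i : Fin n) : q i.castSucc = 0 := congrFun hq i
  simp [prodTimes, Fin.prod_univ_castSucc, hcast, hlast]

theorem summable_fin_pi_prod {α : Type*} {g : Fin n → α → ℝ} (hg : ∀ i, Summable (g i))
    (hg0 : ∀ i, 0 ≤ g i) : Summable fun q : Fin n → α ↦ ∏ i, g i (q i) := by
  induction n with
  | zero => exact Summable.of_finite
  | succ n ih =>
    rw [← (Fin.consEquiv fun _ ↦ α).summable_iff]
    simpa [Function.comp_def, Fin.prod_univ_succ] using (hg 0).mul_of_nonneg
      (ih (fun i ↦ hg i.succ) fun i ↦ hg0 i.succ) (hg0 0)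
      fun q ↦ Finset.prod_nonneg fun i _ ↦ hg0 i.succ (q i)

theorem summable_prodTimes_rpow_neg {s : ℝ} (hs : 1 < s) :
    Summable fun q : Fin n → ℤ ↦ prodTimes q ^ (-s) := by
  let g : ℤ → ℝ := fun k ↦ (if k = 0 then 1 else |(k : ℝ)|) ^ (-s)
  have hg : Summable g := by
    refine (Real.summable_abs_int_rpow hs).congr_cofinite ?_
    filter_upwards [eventually_cofinite_ne 0] with k hk
    simp [g, hk]
  have hg0 : 0 ≤ g := fun k ↦ by
    dsimp only [g]
    positivity
  convert summable_fin_pi_prod (n := n) (fun _ ↦ hg) (fun _ ↦ hg0) using 2 with q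
  exact (Real.finsetProd_rpow _ _ (fun i _ ↦ by positivity) _).symm

end ProdTimes

section TorusExponent

variable {n m : ℕ}

/-- The exponent `ω×` on the torus `(ℝ ⧸ ℤ)ⁿ`, without the normalization by `n`. -/
noncomputable def torusExponent (ξ : UnitAddTorus (Fin n)) : EReal :=
  approxExponent (fun q : Fin n → ℤ ↦ ‖∑ i, q i • ξ i‖) prodTimes

theorem omegaT_eq_mul_torusExponent (hn : n ≠ 0) (y : Fin n → ℝ) :
    omegaT y = n * torusExponent fun i ↦ (y i : UnitAddCircle) := by
  have hn0 : (0 : ℝ) < n := by exact_mod_cast hn.bot_lt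
  have hn0' : (0 : EReal) < n := by exact_mod_cast hn0
  have hntop : (n : EReal) ≠ ⊤ := EReal.natCast_ne_top n
  have hset (v : ℝ) : {q : Fin n → ℤ | ∃ p : ℤ, |∑ i, (q i : ℝ) * y i + p|
      < prodTimes q ^ (-(v / n))}
      = {q | ‖∑ i, q i • (y i : UnitAddCircle)‖ < prodTimes q ^ (-(v / n))} := by
    ext q
    simp [exists_int_abs_add_lt_iff, ← zsmul_eq_mul]
  simp only [omegaT, hset]
  refine le_antisymm (sSup_le ?_) ?_
  · rintro _ ⟨v, rfl, hv⟩
    rw [← EReal.div_le_iff_le_mul hn0' hntop]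
    exact_mod_cast le_approxExponent hv
  · rw [mul_comm, ← EReal.le_div_iff_mul_le hn0' hntop]
    refine approxExponent_le_iff.2 fun v hv ↦ ?_
    rw [EReal.le_div_iff_mul_le hn0' hntop]
    exact le_sSup ⟨v * n, by simp, by rwa [mul_div_cancel_right₀ v hn0.ne']⟩

theorem circleExponent_le_torusExponent_snoc (ξ : UnitAddTorus (Fin m)) (β : UnitAddCircle) :
    circleExponent β ≤ torusExponent (Fin.snoc ξ β : UnitAddTorus (Fin (m + 1))) := by
  refine approxExponent_le_of_injective (f := Fin.snoc (α := fun _ ↦ ℤ) 0)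
    (Fin.snoc_right_injective _) (fun k ↦ ?_) ?_
  · simp [Fin.sum_univ_castSucc]
  · filter_upwards [eventually_cofinite_ne 0] with k hk
    rw [prodTimes_of_init_eq_zero (by simp) (by simpa using hk), Fin.snoc_last]

theorem approxExponent_init_eq_zero_le_circleExponent (ξ : UnitAddTorus (Fin m))
    (β : UnitAddCircle) :
    approxExponent (fun q : {q : Fin (m + 1) → ℤ // Fin.init q = 0} ↦
      ‖∑ i, q.1 i • (Fin.snoc ξ β : UnitAddTorus (Fin (m + 1))) i‖) (fun q ↦ prodTimes q.1)
      ≤ circleExponent β := by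
  have hinj : Injective fun q : {q : Fin (m + 1) → ℤ // Fin.init q = 0} ↦ q.1 (Fin.last m) := by
    rintro ⟨q, hq⟩ ⟨r, hr⟩ hqr
    rw [Subtype.mk.injEq, ← Fin.snoc_init_self q, ← Fin.snoc_init_self r, hq, hr]
    exact congrArg _ hqr
  refine approxExponent_le_of_injective hinj (fun q ↦ ?_) ?_
  · have hcast (i : Fin m) : q.1 i.castSucc = 0 := congrFun q.2 i
    simp [Fin.sum_univ_castSucc, hcast]
  · filter_upwards [hinj.tendsto_cofinite.eventually (eventually_cofinite_ne 0)] with q hq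
    exact (prodTimes_of_init_eq_zero q.2 hq).symm

theorem ae_torusExponent_snoc_eq (β : UnitAddCircle) :
    ∀ᵐ ξ : UnitAddTorus (Fin m),
      torusExponent (Fin.snoc ξ β : UnitAddTorus (Fin (m + 1))) = circleExponent β := by
  have hgeneric : ∀ᵐ ξ : UnitAddTorus (Fin m),
      approxExponent (fun q : {q : Fin (m + 1) → ℤ // Fin.init q ≠ 0} ↦
        ‖∑ i, Fin.init q.1 i • ξ i + q.1 (Fin.last m) • β‖) (fun q ↦ prodTimes q.1) ≤ (1 : ℝ) :=
    ae_approxExponent_norm_sum_zsmul_add_le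
      (k := fun q : {q : Fin (m + 1) → ℤ // Fin.init q ≠ 0} ↦ Fin.init q.1)
      (fun q ↦ q.2) (fun q ↦ q.1 (Fin.last m) • β) (fun q ↦ one_le_prodTimes q.1)
      fun s hs ↦ (summable_prodTimes_rpow_neg hs).subtype _
  filter_upwards [hgeneric] with ξ hξ
  refine le_antisymm ?_ (circleExponent_le_torusExponent_snoc ξ β)
  refine (approxExponent_le_max_subtype fun q ↦ Fin.init q = 0).trans (max_le ?_ ?_)
  · exact approxExponent_init_eq_zero_le_circleExponent ξ β
  · simpa [Fin.sum_univ_castSucc, Fin.init] using hξ.trans (one_le_circleExponent β)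

theorem ae_omegaT_snoc_eq (m : ℕ) (b : ℝ) :
    ∀ᵐ x : Fin m → ℝ, omegaT (Fin.snoc x b : Fin (m + 1) → ℝ) = (m + 1 : ℕ) * sigma1 b := by
  filter_upwards [quasiMeasurePreserving_coe_unitAddTorus.ae
    (ae_torusExponent_snoc_eq (b : UnitAddCircle))] with x hx
  rw [omegaT_eq_mul_torusExponent m.succ_ne_zero, sigma1_eq_circleExponent, ← hx]
  congr 2
  exact Fin.comp_snoc (fun t : ℝ ↦ (t : UnitAddCircle)) x b

end TorusExponent

theorem omegaTMeas_eq_of_ae_eq {n : ℕ} {μ : Measure (Fin n → ℝ)} [NeZero μ] {c : EReal}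
    (hμ : ∀ᵐ y ∂μ, omegaT y = c) : omegaTMeas μ = c := by
  have hpos (v : ℝ) : 0 < μ {y | (v : EReal) < omegaT y} ↔ v < c := by
    rw [pos_iff_ne_zero, ← frequently_ae_iff, frequently_congr (hμ.mono fun y hy ↦ by rw [hy]),
      frequently_const]
  simp only [omegaTMeas, hpos]
  refine le_antisymm (sSup_le ?_) (EReal.ge_of_forall_gt_iff_ge.1 fun v hv ↦ le_sSup ⟨v, rfl, hv⟩)
  rintro _ ⟨v, rfl, hv⟩
  exact hv.le

theorem measurableEmbedding_finSnoc (m : ℕ) (b : ℝ) :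
    MeasurableEmbedding fun x : Fin m → ℝ ↦ (Fin.snoc x b : Fin (m + 1) → ℝ) := by
  have hinit : Function.LeftInverse (fun y : Fin (m + 1) → ℝ ↦ (Fin.init y : Fin m → ℝ))
      fun x ↦ Fin.snoc x b := fun x ↦ Fin.init_snoc _ _
  refine (hinit.isClosedEmbedding ?_ ?_).measurableEmbedding
  · exact continuous_pi fun i ↦ continuous_apply _
  · exact Continuous.finSnoc (A := fun _ ↦ ℝ) continuous_id continuous_const

theorem stmt4 (m : ℕ) (hm : 1 ≤ m) (b : ℝ) :
    omegaTMeas (Measure.map (fun x : Fin m → ℝ => Fin.snoc x b) volume)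
      = max (((m + 1 : ℕ) : EReal)) (((m + 1 : ℕ) : EReal) * sigma1 b) := by
  have hσ : 1 ≤ sigma1 b := sigma1_eq_circleExponent b ▸ one_le_circleExponent b
  have hsnoc := measurableEmbedding_finSnoc m b
  have : NeZero (Measure.map (fun x : Fin m → ℝ => (Fin.snoc x b : Fin (m + 1) → ℝ)) volume) :=
    ⟨(Measure.map_ne_zero_iff hsnoc.measurable.aemeasurable).2 (NeZero.ne volume)⟩
  rw [max_eq_right (le_mul_of_one_le_right (Nat.cast_nonneg' _) hσ)]
  exact omegaTMeas_eq_of_ae_eq (hsnoc.ae_map_iff.2 (ae_omegaT_snoc_eq m b))
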